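/- Let X be a real Banach space, J : X → X nonexpansive, Φ(λ,x) = λ J(((1−λ)/λ) x) for λ ∈ (0,1], and v_n = J^n(0)/n. Then there exists a continuous function λ̄ : [0,∞) → (0,1] with t·λ̄(t) → 1 as t → ∞ (i.e. λ̄(t) ~ 1/t) and a differentiable function w : [0,∞) → X satisfying w'(t) = Φ(λ̄(t), w(t)) − w(t) for all t ≥ 0, such that ‖w(n) − v_n‖ → 0 as n → ∞. -/

import Mathlib

open Filter

/-!
Let `U` solve `U' = J U - U` with `U 0 = 0`. Putting `w = U(s) / s` and `λ = 1 / (1 + s)` turns this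
autonomous equation into `w' = Φ(λ, w) - w`, provided the clock `s = s(t)` satisfies
`s' = s / (1 + s)`; this is solved by `s + log s = t`, so that `s ~ t` and `λ ~ 1 / t`.
Chernoff's estimate `‖U s - Jⁿ 0‖ ≤ ‖J 0‖ √((n - s)² + s)` at `s = s(n)`, where `n - s = log s`,
then gives `‖w n - Jⁿ 0 / n‖ = O(√s / s) → 0`.
-/

open Set Metric Topology Function
open scoped NNReal

section IntegralCurve

variable {E : Type*} [NormedAddCommGroup E] [NormedSpace ℝ E]

lemma isIntegralCurveOn_union_of_isClosed {γ : ℝ → E} {v : ℝ → E → E} {s t : Set ℝ}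
    (hs : IsClosed s) (ht : IsClosed t) (hγs : IsIntegralCurveOn γ v s)
    (hγt : IsIntegralCurveOn γ v t) : IsIntegralCurveOn γ v (s ∪ t) := by
  have within {u : Set ℝ} (hu : IsClosed u) (h : IsIntegralCurveOn γ v u) (τ : ℝ) :
      HasDerivWithinAt γ (v τ (γ τ)) u τ := by
    by_cases hτ : τ ∈ u
    · exact h τ hτ
    · exact HasFDerivWithinAt.of_notMem_closure (hu.closure_eq.symm ▸ hτ)
  exact fun τ _ ↦ (within hs hγs τ).union (within ht hγt τ)

lemma isIntegralCurveOn_Ici_of_forall_Icc {γ : ℝ → E} {v : ℝ → E → E} {ε : ℝ} (hε : 0 < ε)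
    (h : ∀ n : ℕ, IsIntegralCurveOn γ v (Icc (n * ε) ((n + 1) * ε))) :
    IsIntegralCurveOn γ v (Ici 0) := by
  have on_initial (n : ℕ) : IsIntegralCurveOn γ v (Icc 0 ((n + 1) * ε)) := by
    induction n with
    | zero => simpa using h 0
    | succ n ih =>
      have := isIntegralCurveOn_union_of_isClosed isClosed_Icc isClosed_Icc ih (h (n + 1))
      rw [Nat.cast_succ] at this ⊢
      rwa [Icc_union_Icc_eq_Icc (by positivity) (by gcongr; simp)] at this
  intro t ht
  obtain ⟨n, hn⟩ := exists_nat_gt (t / ε)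
  have htn : t < (n + 1) * ε := by
    rw [div_lt_iff₀ hε] at hn
    linarith
  refine (on_initial n t ⟨ht, htn.le⟩).mono_of_mem_nhdsWithin ?_
  exact inter_mem self_mem_nhdsWithin (mem_nhdsWithin_of_mem_nhds (Iic_mem_nhds htn))

lemma exists_isIntegralCurveOn_Ici_of_uniform_time {f : E → E} {ε : ℝ} (hε : 0 < ε)
    (h : ∀ x, ∃ γ : ℝ → E, γ 0 = x ∧ IsIntegralCurveOn γ (fun _ ↦ f) (Icc 0 ε)) (x : E) :
    ∃ γ : ℝ → E, γ 0 = x ∧ IsIntegralCurveOn γ (fun _ ↦ f) (Ici 0) := by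
  choose S hS₀ hS using h
  let node (n : ℕ) : E := (fun y ↦ S y ε)^[n] x
  let γ (t : ℝ) : E := S (node ⌊t / ε⌋₊) (t - ⌊t / ε⌋₊ * ε)
  have γ_node (n : ℕ) : γ (n * ε) = node n := by simp [γ, hε.ne', hS₀]
  have γ_eqOn (n : ℕ) : EqOn γ (fun t ↦ S (node n) (t - n * ε)) (Icc (n * ε) ((n + 1) * ε)) := by
    intro t ht
    rcases ht.2.eq_or_lt with rfl | hlt
    · calc γ ((n + 1) * ε) = node (n + 1) := by exact_mod_cast γ_node (n + 1)
        _ = S (node n) ε := iterate_succ_apply' ..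
        _ = S (node n) ((n + 1) * ε - n * ε) := by ring_nf
    · have hfloor : ⌊t / ε⌋₊ = n := by
        rw [Nat.floor_eq_iff (div_nonneg ((by positivity : 0 ≤ n * ε).trans ht.1) hε.le)]
        exact ⟨(le_div_iff₀ hε).2 ht.1, (div_lt_iff₀ hε).2 hlt⟩
      simp only [γ, hfloor]
  refine ⟨γ, by simpa [node] using γ_node 0, isIntegralCurveOn_Ici_of_forall_Icc hε fun n t ht ↦ ?_⟩
  rw [γ_eqOn n ht]
  refine HasDerivWithinAt.congr ?_ (γ_eqOn n) (γ_eqOn n ht)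
  have hmaps : MapsTo (· - n * ε) (Icc (n * ε) ((n + 1) * ε)) (Icc 0 ε) := fun τ hτ ↦
    ⟨sub_nonneg.2 hτ.1, by linarith [hτ.2]⟩
  simpa [comp_def] using (hS (node n) _ (hmaps ht)).scomp t
    ((hasDerivAt_id t).sub_const (n * ε)).hasDerivWithinAt hmaps

lemma exists_isIntegralCurveOn_Icc_of_lipschitzWith [CompleteSpace E] {f : E → E} {K : ℝ≥0}
    (hf : LipschitzWith K f) (x : E) :
    ∃ γ : ℝ → E, γ 0 = x ∧ IsIntegralCurveOn γ (fun _ ↦ f) (Icc 0 (1 + K : ℝ)⁻¹) := by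
  have hK : (0 : ℝ) < 1 + K := by positivity
  have hpl : IsPicardLindelof (fun _ ↦ f) (⟨0, le_rfl, by positivity⟩ : Icc 0 (1 + K : ℝ)⁻¹) x
      ‖f x‖₊ 0 ((1 + K) * ‖f x‖₊) K := by
    refine .of_time_independent (fun y hy ↦ ?_) hf.lipschitzOnWith ?_
    · calc ‖f y‖ ≤ ‖f x‖ + dist (f y) (f x) := by
            rw [dist_eq_norm]; exact norm_le_norm_add_norm_sub' _ _
        _ ≤ ‖f x‖ + K * ‖f x‖ := by
            gcongr
            exact (hf.dist_le_mul y x).trans (by gcongr; exact mem_closedBall.1 hy)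
        _ = ((1 + K) * ‖f x‖₊ : ℝ≥0) := by push_cast; ring
    · rw [sub_self, sub_zero, max_eq_left (by positivity)]
      push_cast
      rw [sub_zero, mul_right_comm, mul_inv_cancel₀ hK.ne', one_mul]
  exact hpl.exists_eq_forall_mem_Icc_hasDerivWithinAt₀

theorem exists_isIntegralCurveOn_Ici_of_lipschitzWith [CompleteSpace E] {f : E → E} {K : ℝ≥0}
    (hf : LipschitzWith K f) (x : E) :
    ∃ γ : ℝ → E, γ 0 = x ∧ IsIntegralCurveOn γ (fun _ ↦ f) (Ici 0) :=
  exists_isIntegralCurveOn_Ici_of_uniform_time (by positivity)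
    (exists_isIntegralCurveOn_Icc_of_lipschitzWith hf) x

end IntegralCurve

section Relaxation

variable {E : Type*} [NormedAddCommGroup E] [NormedSpace ℝ E]
  {V v : ℝ → E} {B β : ℝ → ℝ} {a : ℝ}

lemma norm_le_of_hasDerivWithinAt_sub_self_of_lt
    (hV : ∀ t ∈ Ici a, HasDerivWithinAt V (v t - V t) (Ici a) t)
    (hB : ∀ t ∈ Ici a, HasDerivWithinAt B (β t) (Ici a) t) (ha : ‖V a‖ ≤ B a)
    (hv : ∀ t ∈ Ici a, ‖V t‖ = B t → ‖v t‖ < ‖V t‖ + β t) {t : ℝ} (ht : t ∈ Ici a) :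
    ‖V t‖ ≤ B t := by
  have hexp (τ : ℝ) := (Real.hasDerivAt_exp τ).hasDerivWithinAt (s := Ici a)
  have hexpV : ∀ τ ∈ Ici a,
      HasDerivWithinAt (fun τ ↦ Real.exp τ • V τ) (Real.exp τ • v τ) (Ici a) τ := fun τ hτ ↦
    ((hexp τ).smul (hV τ hτ)).congr_deriv (by rw [← smul_add, sub_add_cancel])
  have hexpB : ∀ τ ∈ Ici a, HasDerivWithinAt (fun τ ↦ Real.exp τ * B τ)
      (Real.exp τ * (B τ + β τ)) (Ici a) τ := fun τ hτ ↦
    ((hexp τ).mul (hB τ hτ)).congr_deriv (mul_add ..).symm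
  have norm_exp_smul (τ : ℝ) (y : E) : ‖Real.exp τ • y‖ = Real.exp τ * ‖y‖ := by
    rw [norm_smul, Real.norm_eq_abs, Real.abs_exp]
  have hle := image_norm_le_of_norm_deriv_right_lt_deriv_boundary' (a := a) (b := t)
    (fun τ hτ ↦ (hexpV τ hτ.1).continuousWithinAt.mono Icc_subset_Ici_self)
    (fun τ hτ ↦ (hexpV τ hτ.1).mono (Ici_subset_Ici.2 hτ.1))
    (by rw [norm_exp_smul]; gcongr)
    (fun τ hτ ↦ (hexpB τ hτ.1).continuousWithinAt.mono Icc_subset_Ici_self)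
    (fun τ hτ ↦ (hexpB τ hτ.1).mono (Ici_subset_Ici.2 hτ.1))
    (fun τ hτ heq ↦ by
      have heq : ‖V τ‖ = B τ := by simpa [norm_exp_smul] using heq
      rw [norm_exp_smul, ← heq]
      gcongr
      exact hv τ hτ.1 heq)
    ⟨ht, le_rfl⟩
  rw [norm_exp_smul] at hle
  exact le_of_mul_le_mul_left hle (Real.exp_pos t)

theorem norm_le_of_hasDerivWithinAt_sub_self
    (hV : ∀ t ∈ Ici a, HasDerivWithinAt V (v t - V t) (Ici a) t)
    (hB : ∀ t ∈ Ici a, HasDerivWithinAt B (β t) (Ici a) t) (ha : ‖V a‖ ≤ B a)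
    (hv : ∀ t ∈ Ici a, B t ≤ ‖V t‖ → ‖v t‖ ≤ ‖V t‖ + β t) {t : ℝ} (ht : t ∈ Ici a) :
    ‖V t‖ ≤ B t := by
  have perturbed {ε : ℝ} (hε : 0 < ε) : ‖V t‖ ≤ B t + ε * (t - a) := by
    refine norm_le_of_hasDerivWithinAt_sub_self_of_lt (B := fun τ ↦ B τ + ε * (τ - a))
      (β := fun τ ↦ β τ + ε) hV (fun τ hτ ↦ ?_) (by simpa using ha) (fun τ hτ heq ↦ ?_) ht
    · have hlin : HasDerivAt (fun τ ↦ ε * (τ - a)) ε τ := by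
        simpa using ((hasDerivAt_id τ).sub_const a).const_mul ε
      exact (hB τ hτ).add hlin.hasDerivWithinAt
    · have : 0 ≤ ε * (τ - a) := mul_nonneg hε.le (sub_nonneg.2 hτ)
      linarith [hv τ hτ (by linarith)]
  have hlim : Tendsto (fun ε ↦ B t + ε * (t - a)) (𝓝[>] 0) (𝓝 (B t)) := by
    have : Continuous fun ε ↦ B t + ε * (t - a) := by fun_prop
    simpa using (this.tendsto 0).mono_left nhdsWithin_le_nhds
  exact ge_of_tendsto hlim (eventually_mem_nhdsWithin.mono fun _ ↦ perturbed)

end Relaxation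

section Chernoff

lemma sqrt_le_sqrt_add_sub_div {p q : ℝ} (hp : 0 < p) (hq : 0 ≤ q) :
    √q ≤ √p + (q - p) / (2 * √p) := by
  have : 0 < √p := Real.sqrt_pos.2 hp
  rw [← sub_le_iff_le_add', le_div_iff₀ (by positivity)]
  nlinarith [sq_nonneg (√q - √p), Real.sq_sqrt hp.le, Real.sq_sqrt hq]

lemma hasDerivAt_sqrt_sub_sq_add {c t : ℝ} (h : 0 < (c - t) ^ 2 + t) :
    HasDerivAt (fun τ ↦ √((c - τ) ^ 2 + τ))
      (((c - 1 - t) ^ 2 + t - ((c - t) ^ 2 + t)) / (2 * √((c - t) ^ 2 + t))) t := by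
  have hsq : HasDerivAt (fun τ ↦ (c - τ) ^ 2 + τ) ((c - 1 - t) ^ 2 + t - ((c - t) ^ 2 + t)) t := by
    refine ((((hasDerivAt_id t).const_sub c).pow 2).add (hasDerivAt_id t)).congr_deriv ?_
    simp only [id]
    ring
  exact hsq.sqrt h.ne'

lemma dist_iterate_le_mul_of_lipschitzWith_one {α : Type*} [PseudoMetricSpace α] {f : α → α}
    (hf : LipschitzWith 1 f) (x : α) (n : ℕ) : dist x (f^[n] x) ≤ n * dist x (f x) := by
  simpa using dist_le_range_sum_of_dist_le (f := fun k ↦ f^[k] x) n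
    fun {k} _ ↦ hf.dist_iterate_succ_le_geometric x k

variable {E : Type*} [NormedAddCommGroup E] [NormedSpace ℝ E] {J : E → E} {U : ℝ → E}

lemma hasDerivWithinAt_sub_const_of_isIntegralCurveOn {s : Set ℝ}
    (hU : IsIntegralCurveOn U (fun _ x ↦ J x - x) s) (y : E) {t : ℝ} (ht : t ∈ s) :
    HasDerivWithinAt (fun t ↦ U t - y) ((J (U t) - y) - (U t - y)) s t := by
  simpa using (hU t ht).sub_const y

variable (hJ : LipschitzWith 1 J) (hU : IsIntegralCurveOn U (fun _ x ↦ J x - x) (Ici 0))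
include hJ hU

lemma norm_sub_apply_zero_le_mul {t : ℝ} (ht : 0 ≤ t) : ‖U t - U 0‖ ≤ ‖J (U 0) - U 0‖ * t := by
  refine norm_le_of_hasDerivWithinAt_sub_self (β := fun _ ↦ ‖J (U 0) - U 0‖)
    (fun τ ↦ hasDerivWithinAt_sub_const_of_isIntegralCurveOn hU (U 0)) (fun τ _ ↦ ?_) (by simp)
    (fun τ _ _ ↦ ?_) ht
  · simpa using ((hasDerivAt_id τ).const_mul ‖J (U 0) - U 0‖).hasDerivWithinAt
  · exact (norm_sub_le_norm_sub_add_norm_sub _ (J (U 0)) _).trans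
      (by gcongr; simpa using hJ.norm_sub_le (U τ) (U 0))

/-- The radius `φₙ t = √((n - t)² + t)` propagates along the equation because concavity of the
square root gives `φₙ ≤ φₙ₊₁ + φₙ₊₁'`. -/
theorem norm_sub_iterate_le_mul_sqrt (n : ℕ) {t : ℝ} (ht : 0 ≤ t) :
    ‖U t - J^[n] (U 0)‖ ≤ ‖J (U 0) - U 0‖ * √((n - t) ^ 2 + t) := by
  set C := ‖J (U 0) - U 0‖
  induction n generalizing t with
  | zero =>
    refine (norm_sub_apply_zero_le_mul hJ hU ht).trans ?_
    gcongr
    exact Real.le_sqrt_of_sq_le (by simpa using ht)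
  | succ n ih =>
    have radicand_pos : ∀ τ ∈ Ici (0 : ℝ), 0 < ((n + 1 : ℕ) - τ) ^ 2 + τ := by
      intro τ (hτ : 0 ≤ τ)
      rcases hτ.eq_or_lt with rfl | hτ
      · simp only [sub_zero, add_zero]; positivity
      · exact add_pos_of_nonneg_of_pos (sq_nonneg _) hτ
    refine norm_le_of_hasDerivWithinAt_sub_self
      (fun τ ↦ hasDerivWithinAt_sub_const_of_isIntegralCurveOn hU (J^[n + 1] (U 0)))
      (fun τ hτ ↦ ((hasDerivAt_sqrt_sub_sq_add (radicand_pos τ hτ)).const_mul C).hasDerivWithinAt)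
      ?_ (fun τ hτ hle ↦ ?_) ht
    · rw [sub_zero, add_zero, Real.sqrt_sq (by positivity), mul_comm]
      simpa only [dist_eq_norm, norm_sub_rev (U 0) (J (U 0))] using
        dist_iterate_le_mul_of_lipschitzWith_one hJ (U 0) (n + 1)
    · have hτ₀ : 0 ≤ τ := hτ
      have hn : ((n + 1 : ℕ) : ℝ) - 1 = n := by simp
      calc ‖J (U τ) - J^[n + 1] (U 0)‖ ≤ ‖U τ - J^[n] (U 0)‖ := by
            rw [iterate_succ_apply']; simpa using hJ.norm_sub_le (U τ) (J^[n] (U 0))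
        _ ≤ C * √((n - τ) ^ 2 + τ) := ih hτ
        _ ≤ C * (√(((n + 1 : ℕ) - τ) ^ 2 + τ) + _) := by
            gcongr; exact sqrt_le_sqrt_add_sub_div (radicand_pos τ hτ) (by positivity)
        _ ≤ _ := by rw [mul_add, hn]; gcongr

lemma norm_inv_smul_sub_inv_smul_iterate_le (hU₀ : U 0 = 0) (n : ℕ) {s : ℝ} (hs : 0 < s) :
    ‖s⁻¹ • U s - (n : ℝ)⁻¹ • J^[n] 0‖ ≤ ‖J 0‖ * ((√((n - s) ^ 2 + s) + |n - s|) / s) := by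
  have hchernoff : ‖U s - J^[n] 0‖ ≤ ‖J 0‖ * √((n - s) ^ 2 + s) := by
    simpa [hU₀] using norm_sub_iterate_le_mul_sqrt hJ hU n hs.le
  have hiterate : ‖(1 - s * (n : ℝ)⁻¹) • J^[n] 0‖ ≤ |n - s| * ‖J 0‖ := by
    rcases n.eq_zero_or_pos with rfl | hn
    · simpa using by positivity
    · have hn : (0 : ℝ) < n := by exact_mod_cast hn
      calc ‖(1 - s * (n : ℝ)⁻¹) • J^[n] 0‖ ≤ |1 - s * (n : ℝ)⁻¹| * (n * ‖J 0‖) := by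
            rw [norm_smul, Real.norm_eq_abs]
            gcongr
            simpa using dist_iterate_le_mul_of_lipschitzWith_one hJ 0 n
        _ = |(1 - s * (n : ℝ)⁻¹) * n| * ‖J 0‖ := by rw [abs_mul, abs_of_pos hn, mul_assoc]
        _ = |n - s| * ‖J 0‖ := by congr 2; field_simp
  calc ‖s⁻¹ • U s - (n : ℝ)⁻¹ • J^[n] 0‖
      = ‖s⁻¹ • ((U s - J^[n] 0) + (1 - s * (n : ℝ)⁻¹) • J^[n] 0)‖ := by
        congr 1
        match_scalars <;> field_simp
        ring
    _ = s⁻¹ * ‖(U s - J^[n] 0) + (1 - s * (n : ℝ)⁻¹) • J^[n] 0‖ := by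
        rw [norm_smul, Real.norm_of_nonneg (by positivity)]
    _ ≤ s⁻¹ * (‖J 0‖ * √((n - s) ^ 2 + s) + |n - s| * ‖J 0‖) := by
        gcongr; exact norm_add_le_of_le hchernoff hiterate
    _ = ‖J 0‖ * ((√((n - s) ^ 2 + s) + |n - s|) / s) := by ring

end Chernoff

section Clock

/-- The increasing bijection `y ↦ y + exp y` of the real line. -/
noncomputable def addExpOrderIso : ℝ ≃o ℝ :=
  (strictMono_id.add Real.exp_strictMono).orderIsoOfSurjective _ <|
    (continuous_id.add Real.continuous_exp).surjective
      (tendsto_id.atTop_add_atTop Real.tendsto_exp_atTop)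
      (tendsto_id.atBot_add Real.tendsto_exp_atBot)

/-- The solution `s > 0` of `s + log s = t`, found through its logarithm `y`, which solves
`y + exp y = t`. -/
noncomputable def addLogInv (t : ℝ) : ℝ := Real.exp (addExpOrderIso.symm t)

lemma addLogInv_pos (t : ℝ) : 0 < addLogInv t := Real.exp_pos _

lemma log_addLogInv_add (t : ℝ) : Real.log (addLogInv t) + addLogInv t = t := by
  rw [addLogInv, Real.log_exp]
  exact addExpOrderIso.apply_symm_apply t

lemma hasDerivAt_addLogInv (t : ℝ) :
    HasDerivAt addLogInv (addLogInv t / (1 + addLogInv t)) t := by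
  have hsymm : HasDerivAt addExpOrderIso.symm (1 + addLogInv t)⁻¹ t :=
    .of_local_left_inverse addExpOrderIso.symm.continuous.continuousAt
      ((hasDerivAt_id _).add (Real.hasDerivAt_exp _)) (by have := addLogInv_pos t; positivity)
      (.of_forall addExpOrderIso.apply_symm_apply)
  exact hsymm.exp

lemma continuous_addLogInv : Continuous addLogInv :=
  continuous_iff_continuousAt.2 fun t ↦ (hasDerivAt_addLogInv t).continuousAt

lemma tendsto_addLogInv_atTop : Tendsto addLogInv atTop atTop :=
  Real.tendsto_exp_atTop.comp addExpOrderIso.symm.tendsto_atTop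

lemma tendsto_log_div_self_atTop : Tendsto (fun s ↦ Real.log s / s) atTop (𝓝 0) :=
  Real.isLittleO_log_id_atTop.tendsto_div_nhds_zero

lemma tendsto_mul_inv_one_add_addLogInv :
    Tendsto (fun t ↦ t * (1 + addLogInv t)⁻¹) atTop (𝓝 1) := by
  have hratio : Tendsto (fun s ↦ (Real.log s / s + 1) / (s⁻¹ + 1)) atTop (𝓝 1) := by
    simpa [Pi.div_def] using
      (tendsto_log_div_self_atTop.add_const 1).div (tendsto_inv_atTop_zero.add_const 1)
        (by norm_num)
  refine (hratio.comp tendsto_addLogInv_atTop).congr fun t ↦ ?_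
  have hpos := addLogInv_pos t
  calc (Real.log (addLogInv t) / addLogInv t + 1) / ((addLogInv t)⁻¹ + 1)
      = (Real.log (addLogInv t) + addLogInv t) * (1 + addLogInv t)⁻¹ := by field_simp
    _ = t * (1 + addLogInv t)⁻¹ := by rw [log_addLogInv_add]

lemma tendsto_sqrt_log_sq_add_add_abs_log_div :
    Tendsto (fun s ↦ (√(Real.log s ^ 2 + s) + |Real.log s|) / s) atTop (𝓝 0) := by
  have hlim : Tendsto (fun s ↦ √((Real.log s / s) ^ 2 + s⁻¹) + |Real.log s / s|) atTop (𝓝 0) := by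
    simpa using ((tendsto_log_div_self_atTop.pow 2).add tendsto_inv_atTop_zero).sqrt.add
      tendsto_log_div_self_atTop.abs
  refine hlim.congr' ((eventually_gt_atTop 0).mono fun s hs ↦ ?_)
  have hsqrt : √((Real.log s / s) ^ 2 + s⁻¹) = √(Real.log s ^ 2 + s) / s := by
    rw [show (Real.log s / s) ^ 2 + s⁻¹ = (Real.log s ^ 2 + s) / s ^ 2 by field_simp,
      Real.sqrt_div (by positivity), Real.sqrt_sq hs.le]
  simp only [hsqrt, abs_div, abs_of_pos hs, add_div]

end Clock

lemma hasDerivAt_inv_smul_comp {E : Type*} [NormedAddCommGroup E] [NormedSpace ℝ E] {J : E → E}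
    {U : ℝ → E} {s : ℝ → ℝ} {t : ℝ} (hst : 0 < s t)
    (hU : HasDerivAt U (J (U (s t)) - U (s t)) (s t)) (hs : HasDerivAt s (s t / (1 + s t)) t) :
    HasDerivAt (fun t ↦ (s t)⁻¹ • U (s t))
      ((1 + s t)⁻¹ • J (((1 - (1 + s t)⁻¹) / (1 + s t)⁻¹) • (s t)⁻¹ • U (s t))
        - (s t)⁻¹ • U (s t)) t := by
  have hscale : ((1 - (1 + s t)⁻¹) / (1 + s t)⁻¹) • (s t)⁻¹ • U (s t) = U (s t) := by
    rw [smul_smul, show (1 - (1 + s t)⁻¹) / (1 + s t)⁻¹ * (s t)⁻¹ = 1 by field_simp; ring, one_smul]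
  rw [hscale]
  refine ((hs.inv hst.ne').smul (hU.scomp t hs)).congr_deriv ?_
  simp only [Pi.inv_apply, comp_apply]
  match_scalars <;> field_simp
  ring

/-- for a nonexpansive `J` and `Φ(λ,x) = λ J(((1-λ)/λ)x)`, there exist
a continuous parametrization `λ̄ : [0,∞) → (0,1]` with `λ̄(t) ~ 1/t` (i.e. `t λ̄(t) → 1`)
and a solution `w` of `w'(t) = Φ(λ̄(t),w(t)) - w(t)` such that
`‖w(n) - v_n‖ → 0`, where `v_n = J^n(0)/n`. -/
theorem exists_slow_parametrization_tracking_vn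
    {X : Type*} [NormedAddCommGroup X] [NormedSpace ℝ X] [CompleteSpace X]
    (J : X → X) (hJ : ∀ x y : X, ‖J x - J y‖ ≤ ‖x - y‖) :
    ∃ (lamb : ℝ → ℝ) (w : ℝ → X),
      ContinuousOn lamb (Set.Ici (0 : ℝ)) ∧
      (∀ t ≥ (0 : ℝ), lamb t ∈ Set.Ioc (0 : ℝ) 1) ∧
      Tendsto (fun t : ℝ => t * lamb t) atTop (nhds 1) ∧
      (∀ t ≥ (0 : ℝ),
        HasDerivAt w (lamb t • J (((1 - lamb t) / lamb t) • w t) - w t) t) ∧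
      Tendsto (fun n : ℕ => ‖w (n : ℝ) - (n : ℝ)⁻¹ • J^[n] 0‖) atTop (nhds 0) := by
  have hJ_lip : LipschitzWith 1 J := .mk_one fun x y ↦ by simpa only [dist_eq_norm] using hJ x y
  obtain ⟨U, hU₀, hU⟩ := exists_isIntegralCurveOn_Ici_of_lipschitzWith (hJ_lip.sub .id) 0
  have hpos (t : ℝ) : 0 < 1 + addLogInv t := by linarith [addLogInv_pos t]
  refine ⟨fun t ↦ (1 + addLogInv t)⁻¹, fun t ↦ (addLogInv t)⁻¹ • U (addLogInv t), ?_,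
    fun t _ ↦ ⟨inv_pos.2 (hpos t), inv_le_one_of_one_le₀ (by linarith [addLogInv_pos t])⟩,
    tendsto_mul_inv_one_add_addLogInv, fun t _ ↦ ?_, ?_⟩
  · exact ((continuous_const.add continuous_addLogInv).inv₀ fun t ↦ (hpos t).ne').continuousOn
  · exact hasDerivAt_inv_smul_comp (addLogInv_pos t)
      ((hU _ (addLogInv_pos t).le).hasDerivAt (Ici_mem_nhds (addLogInv_pos t)))
      (hasDerivAt_addLogInv t)
  · have herror := ((tendsto_sqrt_log_sq_add_add_abs_log_div.comp tendsto_addLogInv_atTop).comp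
      tendsto_natCast_atTop_atTop).const_mul ‖J 0‖
    rw [mul_zero] at herror
    refine squeeze_zero (fun _ ↦ norm_nonneg _) (fun n ↦ ?_) herror
    have hlog : (n : ℝ) - addLogInv n = Real.log (addLogInv n) := by
      linarith [log_addLogInv_add n]
    simpa only [comp_apply, hlog] using
      norm_inv_smul_sub_inv_smul_iterate_le hJ_lip hU hU₀ n (addLogInv_pos n)
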